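/- arXiv:2310.11694 — 2 statements merged into one kernel-verified Lean document; each statement's English description precedes it below -/
import Mathlib

section
/- Suppose k = (k₁,k₃) ∈ ℤ² with |k| ≥ 1 and |k|² = k₁² + k₃², and suppose φ, w : [−1,1] → ℂ satisfy (∂_y² − |k|²)φ = w with φ(±1) = 0, with φ ∈ H²(−1,1) and w ∈ L²(−1,1). Then: (i) 2( ‖φ' + 2yφ/(1−y²)‖²_{L²} + |k|²‖φ‖²_{L²} ) ≤ Re ∫_{−1}^{1} ((1−y²)w + 2φ) w̄ dy; (ii) ‖φ'‖²_{L²} + 2|k|²‖φ‖²_{L²} ≤ (8/|k|² + 1) Re ∫_{−1}^{1} ((1−y²)w + 2φ) w̄ dy. -/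
/-!
Write `a = 1 - y²`, `K = |k|²` and `ψ = φ' + 2yφ/a`. Since `⟪a w + 2φ, w⟫ = a ‖w‖² + 2 ⟪φ, w⟫`,
expanding `a ‖w + 2φ/a‖² ≥ 0` gives the pointwise bound `⟪a w + 2φ, w⟫ ≥ -2 ⟪φ, w⟫ - 4 ‖φ‖² / a`.
Testing the equation against `φ` gives `-∫ ⟪φ, w⟫ = ∫ ‖φ'‖² + K ∫ ‖φ‖²`, and integrating the
derivative of `2y ‖φ‖² / a` gives the Hardy-type identity `∫ ‖ψ‖² = ∫ ‖φ'‖² - 2 ∫ ‖φ‖² / a`;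
together these are exactly the first estimate.

For the second estimate it remains to control the singular term `∫ ‖φ‖² / a`. Expanding
`‖ψ - y φ‖² + a ‖φ‖² ≥ 0` and using `∫ (y ‖φ‖²)' = 0` gives
`2 ∫ ‖φ‖² / a ≤ 3 ∫ ‖φ‖² + (1/2) ∫ ‖ψ‖²`, so that the Hardy-type identity recovers `∫ ‖φ'‖²` from
the two terms already estimated.
-/

open Real MeasureTheory

noncomputable section

/-- `|k| = sqrt (k₁² + k₃²)` for `k = (k₁,k₃) ∈ ℤ²`. -/
def kabs (k₁ k₃ : ℤ) : ℝ := Real.sqrt ((k₁ : ℝ) ^ 2 + (k₃ : ℝ) ^ 2)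

open Set Filter Topology
open scoped ENNReal RealInnerProductSpace

section L2

variable {α 𝕜 E : Type*} [RCLike 𝕜] [NormedAddCommGroup E] [InnerProductSpace 𝕜 E]
  {m : MeasurableSpace α} {μ : Measure α}

lemma integrable_inner_of_memLp_two {u v : α → E} (hu : MemLp u 2 μ) (hv : MemLp v 2 μ) :
    Integrable (fun x ↦ inner 𝕜 (u x) (v x)) μ :=
  memLp_one_iff_integrable.1 <| hu.of_bilin (inner 𝕜) 1 hv (hu.1.inner hv.1) <|
    .of_forall fun x ↦ by simpa using nnnorm_inner_le_nnnorm (𝕜 := 𝕜) (u x) (v x)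

lemma re_integral_mul_conj {u v : α → ℂ} (hu : MemLp u 2 μ) (hv : MemLp v 2 μ) :
    (∫ x, u x * starRingEnd ℂ (v x) ∂μ).re = ∫ x, ⟪u x, v x⟫ ∂μ := by
  have huv : Integrable (fun x ↦ u x * starRingEnd ℂ (v x)) μ := by
    simpa only [RCLike.inner_apply] using integrable_inner_of_memLp_two (𝕜 := ℂ) hv hu
  refine (integral_re huv).symm.trans (integral_congr_ae (.of_forall fun x ↦ ?_))
  simp only [Complex.inner, RCLike.re_to_complex, Complex.mul_re, Complex.conj_re, Complex.conj_im]
  ring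

end L2

section Interval

variable {E F G : Type*} [NormedAddCommGroup E] [NormedAddCommGroup F] [NormedAddCommGroup G]
  {a b : ℝ} {p : ℝ≥0∞}

lemma memLp_of_continuousOn_Icc {u : ℝ → E} (hu : ContinuousOn u (Icc a b)) :
    MemLp u p (volume.restrict (Ioc a b)) := by
  obtain ⟨C, hC⟩ := isCompact_Icc.exists_bound_of_continuousOn hu
  refine .of_bound ((hu.aestronglyMeasurable_of_isCompact isCompact_Icc
    measurableSet_Icc).mono_measure (Measure.restrict_mono Ioc_subset_Icc_self le_rfl)) C ?_
  filter_upwards [ae_restrict_mem measurableSet_Ioc] with y hy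
  exact hC y (Ioc_subset_Icc_self hy)

lemma memLp_smul_of_continuousOn_Icc [NormedSpace ℝ E] {f : ℝ → ℝ} {u : ℝ → E}
    (hf : ContinuousOn f (Icc a b)) (hu : MemLp u p (volume.restrict (Ioc a b))) :
    MemLp (fun y ↦ f y • u y) p (volume.restrict (Ioc a b)) :=
  hu.smul (memLp_of_continuousOn_Icc (p := ∞) hf)

lemma intervalIntegrable_inner_of_memLp_two [InnerProductSpace ℝ E] {u v : ℝ → E} (hab : a ≤ b)
    (hu : MemLp u 2 (volume.restrict (Ioc a b))) (hv : MemLp v 2 (volume.restrict (Ioc a b))) :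
    IntervalIntegrable (fun y ↦ ⟪u y, v y⟫) volume a b :=
  (intervalIntegrable_iff_integrableOn_Ioc_of_le hab).2 (integrable_inner_of_memLp_two hu hv)

lemma intervalIntegrable_norm_sq_of_memLp_two {u : ℝ → E} (hab : a ≤ b)
    (hu : MemLp u 2 (volume.restrict (Ioc a b))) :
    IntervalIntegrable (fun y ↦ ‖u y‖ ^ 2) volume a b :=
  (intervalIntegrable_iff_integrableOn_Ioc_of_le hab).2 (hu.integrable_norm_pow two_ne_zero)

lemma absolutelyContinuousOnInterval_bilin [NormedSpace ℝ E] [NormedSpace ℝ F] [NormedSpace ℝ G]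
    (B : E →L[ℝ] F →L[ℝ] G) {u : ℝ → E} {v : ℝ → F}
    (hu : AbsolutelyContinuousOnInterval u a b) (hv : AbsolutelyContinuousOnInterval v a b) :
    AbsolutelyContinuousOnInterval (fun y ↦ B (u y) (v y)) a b := by
  obtain ⟨C, hC⟩ := hu.exists_bound
  obtain ⟨D, hD⟩ := hv.exists_bound
  have dist_le {x y : ℝ} (hx : x ∈ uIcc a b) (hy : y ∈ uIcc a b) :
      dist (B (u x) (v x)) (B (u y) (v y))
        ≤ ‖B‖ * C * dist (v x) (v y) + ‖B‖ * D * dist (u x) (u y) := by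
    have hsplit : B (u x) (v x) - B (u y) (v y)
        = B (u x) (v x - v y) + B (u x - u y) (v y) := by simp
    simp only [dist_eq_norm]
    rw [hsplit]
    calc ‖B (u x) (v x - v y) + B (u x - u y) (v y)‖
        ≤ ‖B‖ * ‖u x‖ * ‖v x - v y‖ + ‖B‖ * ‖u x - u y‖ * ‖v y‖ :=
          norm_add_le_of_le (B.le_opNorm₂ _ _) (B.le_opNorm₂ _ _)
      _ ≤ ‖B‖ * C * ‖v x - v y‖ + ‖B‖ * ‖u x - u y‖ * D := by
          gcongr
          exacts [hC x hx, hD y hy]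
      _ = ‖B‖ * C * ‖v x - v y‖ + ‖B‖ * D * ‖u x - u y‖ := by ring
  refine squeeze_zero' (.of_forall fun _ ↦ Finset.sum_nonneg fun _ _ ↦ dist_nonneg) ?_
    (by simpa using (Tendsto.const_mul (‖B‖ * C) hv).add (Tendsto.const_mul (‖B‖ * D) hu))
  rw [eventually_inf_principal]
  filter_upwards with P hP
  simp only [Finset.mul_sum, ← Finset.sum_add_distrib]
  exact Finset.sum_le_sum fun i hi ↦ dist_le (hP.1 i hi).1 (hP.1 i hi).2

lemma integral_inner_deriv_add_inner_deriv_eq_sub [InnerProductSpace ℝ E] {u u' v v' : ℝ → E}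
    (hu : AbsolutelyContinuousOnInterval u a b) (hv : AbsolutelyContinuousOnInterval v a b)
    (hu' : ∀ᵐ y, y ∈ uIcc a b → HasDerivAt u (u' y) y)
    (hv' : ∀ᵐ y, y ∈ uIcc a b → HasDerivAt v (v' y) y) :
    ∫ y in a..b, (⟪u y, v' y⟫ + ⟪u' y, v y⟫) = ⟪u b, v b⟫ - ⟪u a, v a⟫ := by
  have huv : AbsolutelyContinuousOnInterval (fun y ↦ ⟪u y, v y⟫) a b :=
    absolutelyContinuousOnInterval_bilin (innerSL ℝ) hu hv
  rw [← huv.integral_deriv_eq_sub]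
  refine intervalIntegral.integral_congr_ae ?_
  filter_upwards [hu', hv'] with y hu'y hv'y hy
  exact ((hu'y (uIoc_subset_uIcc hy)).inner ℝ (hv'y (uIoc_subset_uIcc hy))).deriv.symm

end Interval

section Dirichlet

variable {E : Type*} [NormedAddCommGroup E] [InnerProductSpace ℝ E] {φ φ' w : ℝ → E} {K : ℝ}

/-- `φ` is of class `C¹` on `[-1, 1]` with derivative `φ'`, and `φ(±1) = 0`. The derivative is part
of the data and one-sided at `±1`, so that values outside `[-1, 1]` play no role. -/
structure IsDirichlet (φ φ' : ℝ → E) : Prop where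
  hasDerivWithinAt : ∀ y ∈ Icc (-1 : ℝ) 1, HasDerivWithinAt φ (φ' y) (Icc (-1) 1) y
  continuousOn_deriv : ContinuousOn φ' (Icc (-1) 1)
  apply_neg_one : φ (-1) = 0
  apply_one : φ 1 = 0

/-- `φ ∈ H²(-1, 1)` solves `φ'' - K φ = w` with `φ(±1) = 0` and `w ∈ L²(-1, 1)`. Membership in `H²`
is encoded by absolute continuity of `φ'`, the equation holding almost everywhere. -/
structure IsDirichletSolution (K : ℝ) (φ φ' w : ℝ → E) : Prop extends IsDirichlet φ φ' where
  absolutelyContinuousOnInterval_deriv : AbsolutelyContinuousOnInterval φ' (-1) 1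
  ae_hasDerivAt_deriv : ∀ᵐ y, y ∈ Icc (-1 : ℝ) 1 → HasDerivAt φ' (K • φ y + w y) y
  memLp : MemLp w 2 (volume.restrict (Ioc (-1) 1))

/-- The function `φ' + 2yφ/(1 - y²)`. On `(-1, 1)` it equals `(1 - y²) (φ/(1 - y²))'`,
the derivative of `φ` relative to the weight `1 - y²` (which is the Poiseuille profile). -/
def weightedDeriv (φ φ' : ℝ → E) (y : ℝ) : E := φ' y + (2 * y / (1 - y ^ 2)) • φ y

lemma one_sub_sq_pos {y : ℝ} (hy : y ∈ Ioo (-1 : ℝ) 1) : 0 < 1 - y ^ 2 := by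
  nlinarith [hy.1, hy.2]

lemma hasDerivAt_one_sub_sq (y : ℝ) : HasDerivAt (fun y : ℝ ↦ 1 - y ^ 2) (-(2 * y)) y := by
  simpa using ((hasDerivAt_id y).pow 2).const_sub 1

lemma neg_two_mul_inner_sub_le_inner_smul_add {a : ℝ} (ha : 0 < a) (u v : E) :
    -2 * ⟪u, v⟫ - 4 * (‖u‖ ^ 2 / a) ≤ ⟪a • v + (2 : ℝ) • u, v⟫ := by
  have hsq : 0 ≤ a * ‖v + (2 / a) • u‖ ^ 2 := by positivity
  rw [norm_add_sq_real, inner_smul_right, norm_smul, mul_pow, Real.norm_eq_abs, sq_abs,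
    real_inner_comm] at hsq
  rw [inner_add_left, real_inner_smul_left, real_inner_smul_left, real_inner_self_eq_norm_sq]
  refine sub_nonneg.1 (hsq.trans_eq ?_)
  field

lemma two_mul_norm_sq_div_one_sub_sq_le {y : ℝ} (hy : y ∈ Ioo (-1 : ℝ) 1) :
    2 * (‖φ y‖ ^ 2 / (1 - y ^ 2)) ≤ 3 * ‖φ y‖ ^ 2 + 1 / 2 * ‖weightedDeriv φ φ' y‖ ^ 2
      - 1 / 2 * (‖φ y‖ ^ 2 + 2 * y * ⟪φ y, φ' y⟫) := by
  have hy₀ := one_sub_sq_pos hy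
  have hsq : 0 ≤ 1 / 2 * ‖weightedDeriv φ φ' y - y • φ y‖ ^ 2
      + 1 / 2 * (1 - y ^ 2) * ‖φ y‖ ^ 2 := by positivity
  have hinner : ⟪weightedDeriv φ φ' y, y • φ y⟫
      = y * ⟪φ y, φ' y⟫ + 2 * (‖φ y‖ ^ 2 / (1 - y ^ 2)) - 2 * ‖φ y‖ ^ 2 := by
    rw [weightedDeriv, inner_smul_right, inner_add_left, real_inner_smul_left,
      real_inner_self_eq_norm_sq, real_inner_comm]
    field [hy₀.ne']
  rw [norm_sub_sq_real, hinner, norm_smul, mul_pow, Real.norm_eq_abs, sq_abs] at hsq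
  linarith

namespace IsDirichlet

lemma continuousOn (h : IsDirichlet φ φ') : ContinuousOn φ (Icc (-1) 1) :=
  fun y hy ↦ (h.hasDerivWithinAt y hy).continuousWithinAt

lemma hasDerivAt (h : IsDirichlet φ φ') {y : ℝ} (hy : y ∈ Ioo (-1 : ℝ) 1) :
    HasDerivAt φ (φ' y) y :=
  (h.hasDerivWithinAt y (Ioo_subset_Icc_self hy)).hasDerivAt (Icc_mem_nhds hy.1 hy.2)

lemma ae_hasDerivAt (h : IsDirichlet φ φ') :
    ∀ᵐ y, y ∈ uIcc (-1 : ℝ) 1 → HasDerivAt φ (φ' y) y := by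
  filter_upwards [Measure.ae_ne volume (-1), Measure.ae_ne volume 1] with y hy₁ hy₂ hy
  rw [uIcc_of_le (by norm_num)] at hy
  exact h.hasDerivAt ⟨hy.1.lt_of_ne' hy₁, hy.2.lt_of_ne hy₂⟩

lemma exists_lipschitzOnWith (h : IsDirichlet φ φ') :
    ∃ C, LipschitzOnWith C φ (Icc (-1) 1) := by
  obtain ⟨C, hC⟩ := isCompact_Icc.exists_bound_of_continuousOn h.continuousOn_deriv
  exact ⟨C.toNNReal, (convex_Icc _ _).lipschitzOnWith_of_nnnorm_hasDerivWithin_le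
    h.hasDerivWithinAt fun y hy ↦ NNReal.le_toNNReal_of_coe_le (hC y hy)⟩

lemma absolutelyContinuousOnInterval (h : IsDirichlet φ φ') :
    AbsolutelyContinuousOnInterval φ (-1) 1 := by
  obtain ⟨C, hC⟩ := h.exists_lipschitzOnWith
  rw [← uIcc_of_le (by norm_num)] at hC
  exact hC.absolutelyContinuousOnInterval

lemma exists_norm_le_mul_one_sub_sq (h : IsDirichlet φ φ') :
    ∃ C, 0 ≤ C ∧ ∀ y ∈ Icc (-1 : ℝ) 1, ‖φ y‖ ≤ C * (1 - y ^ 2) := by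
  obtain ⟨C, hC⟩ := h.exists_lipschitzOnWith
  refine ⟨C, C.coe_nonneg, fun y hy ↦ ?_⟩
  have hright : ‖φ y‖ ≤ C * (1 - y) := by
    simpa [h.apply_one, Real.dist_eq, abs_of_nonpos (sub_nonpos.2 hy.2)]
      using hC.dist_le_mul y hy 1 (by simp)
  have hleft : ‖φ y‖ ≤ C * (1 + y) := by
    simpa [h.apply_neg_one, Real.dist_eq, abs_of_nonneg (neg_le_iff_add_nonneg.1 hy.1), add_comm]
      using hC.dist_le_mul y hy (-1) (by simp)
  rcases le_total 0 y with hy₀ | hy₀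
  · exact hright.trans (by gcongr; nlinarith [hy.2])
  · exact hleft.trans (by gcongr; nlinarith [hy.1])

lemma memLp (h : IsDirichlet φ φ') : MemLp φ 2 (volume.restrict (Ioc (-1) 1)) :=
  memLp_of_continuousOn_Icc h.continuousOn

lemma memLp_deriv (h : IsDirichlet φ φ') : MemLp φ' 2 (volume.restrict (Ioc (-1) 1)) :=
  memLp_of_continuousOn_Icc h.continuousOn_deriv

lemma memLp_inv_one_sub_sq_smul (h : IsDirichlet φ φ') :
    MemLp (fun y ↦ (1 - y ^ 2)⁻¹ • φ y) 2 (volume.restrict (Ioc (-1) 1)) := by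
  obtain ⟨C, hC₀, hC⟩ := h.exists_norm_le_mul_one_sub_sq
  have hmeas : Measurable fun y : ℝ ↦ (1 - y ^ 2)⁻¹ := by fun_prop
  refine .of_bound (hmeas.aestronglyMeasurable.smul h.memLp.1) C ?_
  filter_upwards [ae_restrict_mem measurableSet_Ioc] with y hy
  have hy' : 0 ≤ 1 - y ^ 2 := by nlinarith [hy.1, hy.2]
  rw [norm_smul, norm_inv, Real.norm_of_nonneg hy', inv_mul_eq_div]
  exact div_le_of_le_mul₀ hy' hC₀ (hC y (Ioc_subset_Icc_self hy))

lemma memLp_weightedDeriv (h : IsDirichlet φ φ') :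
    MemLp (weightedDeriv φ φ') 2 (volume.restrict (Ioc (-1) 1)) := by
  have hquot := memLp_smul_of_continuousOn_Icc (f := fun y ↦ 2 * y) (by fun_prop)
    h.memLp_inv_one_sub_sq_smul
  simp only [smul_smul, ← div_eq_mul_inv] at hquot
  exact h.memLp_deriv.add hquot

lemma intervalIntegrable_norm_sq (h : IsDirichlet φ φ') :
    IntervalIntegrable (fun y ↦ ‖φ y‖ ^ 2) volume (-1) 1 :=
  intervalIntegrable_norm_sq_of_memLp_two (by norm_num) h.memLp

lemma intervalIntegrable_norm_sq_deriv (h : IsDirichlet φ φ') :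
    IntervalIntegrable (fun y ↦ ‖φ' y‖ ^ 2) volume (-1) 1 :=
  intervalIntegrable_norm_sq_of_memLp_two (by norm_num) h.memLp_deriv

lemma intervalIntegrable_norm_sq_weightedDeriv (h : IsDirichlet φ φ') :
    IntervalIntegrable (fun y ↦ ‖weightedDeriv φ φ' y‖ ^ 2) volume (-1) 1 :=
  intervalIntegrable_norm_sq_of_memLp_two (by norm_num) h.memLp_weightedDeriv

lemma intervalIntegrable_norm_sq_div_one_sub_sq (h : IsDirichlet φ φ') :
    IntervalIntegrable (fun y ↦ ‖φ y‖ ^ 2 / (1 - y ^ 2)) volume (-1) 1 := by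
  simpa only [inner_smul_right, real_inner_self_eq_norm_sq, inv_mul_eq_div] using
    intervalIntegrable_inner_of_memLp_two (by norm_num) h.memLp h.memLp_inv_one_sub_sq_smul

-- At `±1` the flux is `x / 0 = 0`, which happens to be its limit.
lemma continuousOn_hardyFlux (h : IsDirichlet φ φ') :
    ContinuousOn (fun y ↦ 2 * y * ‖φ y‖ ^ 2 / (1 - y ^ 2)) (Icc (-1) 1) := by
  obtain ⟨C, hC₀, hC⟩ := h.exists_norm_le_mul_one_sub_sq
  intro y hy
  have hφ := h.continuousOn y hy
  by_cases hy₀ : 1 - y ^ 2 = 0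
  · have hφy : φ y = 0 := norm_le_zero_iff.1 (by simpa [hy₀] using hC y hy)
    have hlim : Tendsto (fun z ↦ 2 * C * ‖φ z‖) (𝓝[Icc (-1) 1] y) (𝓝 0) := by
      simpa [hφy] using (hφ.norm.const_mul (2 * C)).tendsto
    rw [ContinuousWithinAt, hy₀, div_zero]
    refine squeeze_zero_norm' ?_ hlim
    filter_upwards [self_mem_nhdsWithin] with z hz
    have hz' : 0 ≤ 1 - z ^ 2 := by nlinarith [hz.1, hz.2]
    rw [norm_div, norm_mul, norm_mul, norm_pow, norm_norm, Real.norm_two, Real.norm_of_nonneg hz']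
    refine div_le_of_le_mul₀ hz' (by positivity) ?_
    calc 2 * ‖z‖ * ‖φ z‖ ^ 2 ≤ 2 * 1 * (‖φ z‖ * (C * (1 - z ^ 2))) := by
          rw [sq]
          gcongr
          exacts [abs_le.2 hz, hC z hz]
      _ = 2 * C * ‖φ z‖ * (1 - z ^ 2) := by ring
  · exact ContinuousWithinAt.div (by fun_prop) (by fun_prop) hy₀

lemma hasDerivAt_hardyFlux (h : IsDirichlet φ φ') {y : ℝ} (hy : y ∈ Ioo (-1 : ℝ) 1) :
    HasDerivAt (fun y ↦ 2 * y * ‖φ y‖ ^ 2 / (1 - y ^ 2))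
      (‖weightedDeriv φ φ' y‖ ^ 2 - ‖φ' y‖ ^ 2 + 2 * (‖φ y‖ ^ 2 / (1 - y ^ 2))) y := by
  have hy₀ := (one_sub_sq_pos hy).ne'
  refine ((((hasDerivAt_id y).const_mul 2).mul (h.hasDerivAt hy).norm_sq).div
    (hasDerivAt_one_sub_sq y) hy₀).congr_deriv ?_
  rw [weightedDeriv, norm_add_sq_real, inner_smul_right, norm_smul, mul_pow, Real.norm_eq_abs,
    sq_abs, real_inner_comm]
  simp only [Pi.mul_apply, id]
  field

lemma integral_norm_sq_weightedDeriv (h : IsDirichlet φ φ') :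
    ∫ y in (-1 : ℝ)..1, ‖weightedDeriv φ φ' y‖ ^ 2
      = (∫ y in (-1 : ℝ)..1, ‖φ' y‖ ^ 2) - 2 * ∫ y in (-1 : ℝ)..1, ‖φ y‖ ^ 2 / (1 - y ^ 2) := by
  have hψ := h.intervalIntegrable_norm_sq_weightedDeriv
  have hφ' := h.intervalIntegrable_norm_sq_deriv
  have hG := h.intervalIntegrable_norm_sq_div_one_sub_sq.const_mul 2
  have hflux := intervalIntegral.integral_eq_sub_of_hasDerivAt_of_le (by norm_num)
    h.continuousOn_hardyFlux (fun y ↦ h.hasDerivAt_hardyFlux) ((hψ.sub hφ').add hG)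
  rw [intervalIntegral.integral_add (hψ.sub hφ') hG, intervalIntegral.integral_sub hψ hφ',
    intervalIntegral.integral_const_mul] at hflux
  simp only [h.apply_one, h.apply_neg_one, norm_zero] at hflux
  linarith

lemma integral_norm_sq_add_inner_deriv (h : IsDirichlet φ φ') :
    ∫ y in (-1 : ℝ)..1, (‖φ y‖ ^ 2 + 2 * y * ⟪φ y, φ' y⟫) = 0 := by
  have hid : ContDiffOn ℝ 1 (fun y : ℝ ↦ y) (uIcc (-1) 1) := contDiffOn_id
  have hparts := integral_inner_deriv_add_inner_deriv_eq_sub h.absolutelyContinuousOnInterval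
    (hid.absolutelyContinuousOnInterval.fun_smul h.absolutelyContinuousOnInterval)
    h.ae_hasDerivAt (h.ae_hasDerivAt.mono fun y hφ hy ↦ (hasDerivAt_id y).smul (hφ hy))
  rw [h.apply_one, h.apply_neg_one, inner_zero_left, inner_zero_left, sub_zero] at hparts
  rw [← hparts]
  refine intervalIntegral.integral_congr fun y _ ↦ ?_
  simp only [id, inner_add_right, inner_smul_right, one_smul, real_inner_self_eq_norm_sq,
    real_inner_comm (φ y)]
  ring

lemma two_mul_integral_norm_sq_div_one_sub_sq_le (h : IsDirichlet φ φ') :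
    2 * ∫ y in (-1 : ℝ)..1, ‖φ y‖ ^ 2 / (1 - y ^ 2)
      ≤ 3 * (∫ y in (-1 : ℝ)..1, ‖φ y‖ ^ 2)
        + 1 / 2 * ∫ y in (-1 : ℝ)..1, ‖weightedDeriv φ φ' y‖ ^ 2 := by
  have hφ := h.intervalIntegrable_norm_sq.const_mul 3
  have hψ := h.intervalIntegrable_norm_sq_weightedDeriv.const_mul (1 / 2)
  have hφφ' : IntervalIntegrable (fun y ↦ ‖φ y‖ ^ 2 + 2 * y * ⟪φ y, φ' y⟫) volume (-1) 1 :=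
    h.intervalIntegrable_norm_sq.add <| (intervalIntegrable_inner_of_memLp_two (by norm_num)
      h.memLp h.memLp_deriv).continuousOn_mul (by fun_prop)
  have hmono := intervalIntegral.integral_mono_on_of_le_Ioo (by norm_num)
    (h.intervalIntegrable_norm_sq_div_one_sub_sq.const_mul 2)
    ((hφ.add hψ).sub (hφφ'.const_mul (1 / 2)))
    fun y ↦ two_mul_norm_sq_div_one_sub_sq_le (φ := φ) (φ' := φ')
  rwa [intervalIntegral.integral_sub (hφ.add hψ) (hφφ'.const_mul (1 / 2)),
    intervalIntegral.integral_add hφ hψ, intervalIntegral.integral_const_mul,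
    intervalIntegral.integral_const_mul, intervalIntegral.integral_const_mul,
    intervalIntegral.integral_const_mul, h.integral_norm_sq_add_inner_deriv, mul_zero,
    sub_zero] at hmono

end IsDirichlet

namespace IsDirichletSolution

lemma intervalIntegrable_inner (h : IsDirichletSolution K φ φ' w) :
    IntervalIntegrable (fun y ↦ ⟪φ y, w y⟫) volume (-1) 1 :=
  intervalIntegrable_inner_of_memLp_two (by norm_num) h.toIsDirichlet.memLp h.memLp

lemma memLp_weighted_add (h : IsDirichletSolution K φ φ' w) :
    MemLp (fun y ↦ (1 - y ^ 2) • w y + (2 : ℝ) • φ y) 2 (volume.restrict (Ioc (-1) 1)) :=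
  (memLp_smul_of_continuousOn_Icc (by fun_prop) h.memLp).add
    (h.toIsDirichlet.memLp.const_smul (2 : ℝ))

lemma integral_inner (h : IsDirichletSolution K φ φ' w) :
    ∫ y in (-1 : ℝ)..1, ⟪φ y, w y⟫
      = -((∫ y in (-1 : ℝ)..1, ‖φ' y‖ ^ 2) + K * ∫ y in (-1 : ℝ)..1, ‖φ y‖ ^ 2) := by
  have hφ := h.intervalIntegrable_norm_sq.const_mul K
  have hφ' := h.intervalIntegrable_norm_sq_deriv
  have hparts := integral_inner_deriv_add_inner_deriv_eq_sub h.absolutelyContinuousOnInterval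
    h.absolutelyContinuousOnInterval_deriv h.ae_hasDerivAt
    (by simpa only [uIcc_of_le (show (-1 : ℝ) ≤ 1 by norm_num)] using h.ae_hasDerivAt_deriv)
  simp only [inner_add_right, inner_smul_right, real_inner_self_eq_norm_sq, h.apply_one,
    h.apply_neg_one, inner_zero_left, sub_zero] at hparts
  rw [intervalIntegral.integral_add (hφ.add h.intervalIntegrable_inner) hφ',
    intervalIntegral.integral_add hφ h.intervalIntegrable_inner,
    intervalIntegral.integral_const_mul] at hparts
  linarith

lemma two_mul_integral_norm_sq_weightedDeriv_add_le (h : IsDirichletSolution K φ φ' w) :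
    2 * ((∫ y in (-1 : ℝ)..1, ‖weightedDeriv φ φ' y‖ ^ 2) + K * ∫ y in (-1 : ℝ)..1, ‖φ y‖ ^ 2)
      ≤ ∫ y in (-1 : ℝ)..1, ⟪(1 - y ^ 2) • w y + (2 : ℝ) • φ y, w y⟫ := by
  have hφw := h.intervalIntegrable_inner.const_mul (-2)
  have hG := h.intervalIntegrable_norm_sq_div_one_sub_sq.const_mul 4
  have hmono := intervalIntegral.integral_mono_on_of_le_Ioo (by norm_num) (hφw.sub hG)
    (intervalIntegrable_inner_of_memLp_two (by norm_num) h.memLp_weighted_add h.memLp)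
    fun y hy ↦ neg_two_mul_inner_sub_le_inner_smul_add (one_sub_sq_pos hy) (φ y) (w y)
  rw [intervalIntegral.integral_sub hφw hG, intervalIntegral.integral_const_mul,
    intervalIntegral.integral_const_mul, h.integral_inner] at hmono
  linarith [h.integral_norm_sq_weightedDeriv]

lemma integral_norm_sq_deriv_add_le (h : IsDirichletSolution K φ φ' w) (hK : 0 < K) :
    (∫ y in (-1 : ℝ)..1, ‖φ' y‖ ^ 2) + 2 * K * ∫ y in (-1 : ℝ)..1, ‖φ y‖ ^ 2
      ≤ (3 / (2 * K) + 1) * ∫ y in (-1 : ℝ)..1, ⟪(1 - y ^ 2) • w y + (2 : ℝ) • φ y, w y⟫ := by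
  have hfirst := h.two_mul_integral_norm_sq_weightedDeriv_add_le
  have hHardy := h.integral_norm_sq_weightedDeriv
  have hweight := h.two_mul_integral_norm_sq_div_one_sub_sq_le
  set R := ∫ y in (-1 : ℝ)..1, ⟪(1 - y ^ 2) • w y + (2 : ℝ) • φ y, w y⟫
  set X := ∫ y in (-1 : ℝ)..1, ‖weightedDeriv φ φ' y‖ ^ 2
  set Y := ∫ y in (-1 : ℝ)..1, ‖φ y‖ ^ 2
  have hX : 0 ≤ X := intervalIntegral.integral_nonneg (by norm_num) fun y _ ↦ by positivity
  have hY : 3 * Y ≤ 3 / (2 * K) * R := by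
    calc 3 * Y = 3 / (2 * K) * (2 * (K * Y)) := by field
      _ ≤ 3 / (2 * K) * R := by gcongr; linarith
  linarith

lemma integral_inner_weighted_add_nonneg (h : IsDirichletSolution K φ φ' w) (hK : 0 ≤ K) :
    0 ≤ ∫ y in (-1 : ℝ)..1, ⟪(1 - y ^ 2) • w y + (2 : ℝ) • φ y, w y⟫ := by
  have integral_norm_sq_nonneg (u : ℝ → E) : 0 ≤ ∫ y in (-1 : ℝ)..1, ‖u y‖ ^ 2 :=
    intervalIntegral.integral_nonneg (by norm_num) fun y _ ↦ by positivity
  refine le_trans ?_ h.two_mul_integral_norm_sq_weightedDeriv_add_le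
  have hX := integral_norm_sq_nonneg (weightedDeriv φ φ')
  have hY := integral_norm_sq_nonneg φ
  positivity

end IsDirichletSolution

lemma IsDirichletSolution.of_contDiff (hφ : ContDiff ℝ 2 φ)
    (hw : ∀ y ∈ Icc (-1 : ℝ) 1, deriv (deriv φ) y - K • φ y = w y)
    (hφ₁ : φ (-1) = 0) (hφ₂ : φ 1 = 0) : IsDirichletSolution K φ (deriv φ) w where
  hasDerivWithinAt y _ := (hφ.differentiable two_ne_zero y).hasDerivAt.hasDerivWithinAt
  continuousOn_deriv := (hφ.continuous_deriv one_le_two).continuousOn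
  apply_neg_one := hφ₁
  apply_one := hφ₂
  absolutelyContinuousOnInterval_deriv :=
    (hφ.deriv' (n := 1)).contDiffOn.absolutelyContinuousOnInterval
  ae_hasDerivAt_deriv := .of_forall fun y hy ↦ by
    rw [← hw y hy, add_sub_cancel]
    exact ((hφ.deriv' (n := 1)).differentiable one_ne_zero y).hasDerivAt
  memLp := memLp_of_continuousOn_Icc <| ContinuousOn.congr
    (((hφ.deriv' (n := 1)).continuous_deriv_one.sub (hφ.continuous.const_smul K)).continuousOn)
    fun y hy ↦ (hw y hy).symm

end Dirichlet

section Complex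

variable {φ φ' w : ℝ → ℂ} {K : ℝ}

lemma weightedDeriv_eq_add_div (φ φ' : ℝ → ℂ) (y : ℝ) :
    weightedDeriv φ φ' y = φ' y + 2 * (y : ℂ) * φ y / (1 - (y : ℂ) ^ 2) := by
  rw [weightedDeriv, Complex.real_smul]
  push_cast
  ring

lemma IsDirichletSolution.re_integral_mul_conj (h : IsDirichletSolution K φ φ' w) :
    (∫ y in (-1 : ℝ)..1, ((1 - (y : ℂ) ^ 2) * w y + 2 * φ y) * starRingEnd ℂ (w y)).re
      = ∫ y in (-1 : ℝ)..1, ⟪(1 - y ^ 2) • w y + (2 : ℝ) • φ y, w y⟫ := by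
  rw [intervalIntegral.integral_of_le (by norm_num), intervalIntegral.integral_of_le (by norm_num),
    ← _root_.re_integral_mul_conj h.memLp_weighted_add h.memLp]
  simp [Complex.real_smul]

end Complex

theorem poiseuille_positivity_general {E : Type*} [NormedAddCommGroup E] [InnerProductSpace ℝ E]
    {K : ℝ} {φ φ' w : ℝ → E} (h : IsDirichletSolution K φ φ' w) :
    (2 * ((∫ y in (-1 : ℝ)..1, ‖weightedDeriv φ φ' y‖ ^ 2) + K * ∫ y in (-1 : ℝ)..1, ‖φ y‖ ^ 2)
        ≤ ∫ y in (-1 : ℝ)..1, ⟪(1 - y ^ 2) • w y + (2 : ℝ) • φ y, w y⟫) ∧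
      (0 < K → (∫ y in (-1 : ℝ)..1, ‖φ' y‖ ^ 2) + 2 * K * ∫ y in (-1 : ℝ)..1, ‖φ y‖ ^ 2
        ≤ (3 / (2 * K) + 1) * ∫ y in (-1 : ℝ)..1, ⟪(1 - y ^ 2) • w y + (2 : ℝ) • φ y, w y⟫) :=
  ⟨h.two_mul_integral_norm_sq_weightedDeriv_add_le, h.integral_norm_sq_deriv_add_le⟩

/-- **Positivity estimates for the Poiseuille nonlocal term** (Lemma B.4):
if `(∂_y² - |k|²)φ = w` with `φ(±1) = 0` and `|k| ≥ 1`, then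
(i) `2(‖φ' + 2yφ/(1-y²)‖²_{L²} + |k|²‖φ‖²_{L²}) ≤ Re⟨(1-y²)w + 2φ, w⟩`, and
(ii) `‖φ'‖²_{L²} + 2|k|²‖φ‖²_{L²} ≤ (8/|k|² + 1) Re⟨(1-y²)w + 2φ, w⟩`. -/
theorem poiseuille_positivity :
    ∀ (k₁ k₃ : ℤ) (φ w : ℝ → ℂ),
      1 ≤ kabs k₁ k₃ →
      ContDiff ℝ 2 φ →
      IntervalIntegrable (fun y => ‖w y‖ ^ 2) MeasureTheory.volume (-1) 1 →
      (∀ y ∈ Set.Icc (-1:ℝ) 1,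
        deriv (deriv φ) y - ((kabs k₁ k₃ : ℝ) : ℂ) ^ 2 * φ y = w y) →
      φ (-1) = 0 → φ 1 = 0 →
      (2 * ((∫ y in (-1:ℝ)..1,
              ‖deriv φ y + 2 * (y : ℂ) * φ y / (1 - (y : ℂ) ^ 2)‖ ^ 2)
            + (kabs k₁ k₃) ^ 2 * ∫ y in (-1:ℝ)..1, ‖φ y‖ ^ 2)
          ≤ (∫ y in (-1:ℝ)..1,
              (((1 - (y : ℂ) ^ 2) * w y + 2 * φ y) * (starRingEnd ℂ) (w y))).re) ∧
      ((∫ y in (-1:ℝ)..1, ‖deriv φ y‖ ^ 2)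
            + 2 * (kabs k₁ k₃) ^ 2 * ∫ y in (-1:ℝ)..1, ‖φ y‖ ^ 2
          ≤ (8 / (kabs k₁ k₃) ^ 2 + 1) *
            (∫ y in (-1:ℝ)..1,
              (((1 - (y : ℂ) ^ 2) * w y + 2 * φ y) * (starRingEnd ℂ) (w y))).re) := by
  intro k₁ k₃ φ w hk hφ _ hw hφ₁ hφ₂
  have hK : 0 < kabs k₁ k₃ ^ 2 := pow_pos (zero_lt_one.trans_le hk) 2
  have h : IsDirichletSolution (kabs k₁ k₃ ^ 2) φ (deriv φ) w :=
    .of_contDiff hφ (by simpa [Complex.real_smul] using hw) hφ₁ hφ₂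
  obtain ⟨hfirst, hsecond⟩ := poiseuille_positivity_general h
  simp only [h.re_integral_mul_conj, ← weightedDeriv_eq_add_div]
  refine ⟨hfirst, (hsecond hK).trans (mul_le_mul_of_nonneg_right ?_
    (h.integral_inner_weighted_add_nonneg hK.le))⟩
  rw [← div_div]
  gcongr
  norm_num

end
end

section
/- There exists a constant C > 0, depending only on C₀ (and in particular independent of k, c, c₀, f, a, b), such that the following holds. Let a < b, let f ∈ H¹₀(a,b), let u ∈ C²([a,b]) be real-valued with |u'(y)| ≥ c₀ > 0 and |u''(y)| ≤ C₀ for all y ∈ [a,b], and let c ∈ ℂ \ ℝ. Then for every real α ≥ 1: | ∫_a^b f(y)/(u(y)−c) dy | ≤ C c₀⁻¹ α^{−1/2} ( ‖f'‖_{L²} + α‖f‖_{L²} + c₀⁻¹‖f‖_{L²} ). Moreover, if α ≥ c₀⁻¹, then | ∫_a^b f(y)/(u(y)−c) dy | ≤ C c₀⁻¹ α^{−1/2} ( ‖f'‖_{L²} + α‖f‖_{L²} ). -/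
/-
The function `F z = ∫ f / (u - z)` is holomorphic off the real axis, and `‖(u - z)⁻¹‖` in `L²` is at
most `√(π / (c₀ |Im z|))`: substituting `t = u y` turns its square into an arctangent. By
Cauchy-Schwarz this bounds `F` itself at distance `c₀ / α` from the real axis. To come down to
`c`, write `F' = ∫ f / (u - z)²` and integrate by parts against `u' / (u - z)²`: then
`F' = ∫ (f / u')' / (u - z)`, so the same `L²` bound shows that `‖F' z‖` is at most a constant times
`|Im z| ^ (-1/2)`, which is integrable along the vertical ray from `c`.
-/

open Real MeasureTheory

open Set

section Lp

variable {X E F : Type*} [MeasurableSpace X] {μ : Measure X}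
  [NormedAddCommGroup E] [NormedAddCommGroup F]

lemma lpNorm_two_eq_sqrt_integral_norm_sq {f : X → E} (hf : AEStronglyMeasurable f μ) :
    lpNorm f 2 μ = √(∫ x, ‖f x‖ ^ 2 ∂μ) := by
  simp [lpNorm_eq_integral_norm_rpow_toReal two_ne_zero ENNReal.ofNat_ne_top hf, sqrt_eq_rpow]

lemma lpNorm_le_mul_lpNorm_of_ae_le_mul {p : ENNReal} {f : X → E} {g : X → F} {M : ℝ}
    (hM : 0 ≤ M) (hg : MemLp g p μ) (h : ∀ᵐ x ∂μ, ‖f x‖ ≤ M * ‖g x‖) :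
    lpNorm f p μ ≤ M * lpNorm g p μ := by
  by_cases hf : AEStronglyMeasurable f μ
  · rw [← toReal_eLpNorm hf, ← toReal_eLpNorm hg.aestronglyMeasurable,
      ← ENNReal.toReal_ofReal hM, ← ENNReal.toReal_mul]
    exact ENNReal.toReal_mono (ENNReal.mul_ne_top ENNReal.ofReal_ne_top hg.eLpNorm_ne_top)
      (eLpNorm_le_mul_eLpNorm_of_ae_le_mul h p)
  · rw [lpNorm_of_not_aestronglyMeasurable hf]
    exact mul_nonneg hM lpNorm_nonneg

lemma norm_integral_smul_le_lpNorm_mul_lpNorm {𝕜 : Type*} [NormedRing 𝕜] [NormedSpace ℝ F]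
    [Module 𝕜 F] [IsBoundedSMul 𝕜 F] {p q : ENNReal} [ENNReal.HolderTriple p q 1]
    {φ : X → 𝕜} {f : X → F} (hφ : MemLp φ p μ) (hf : MemLp f q μ) :
    ‖∫ x, φ x • f x ∂μ‖ ≤ lpNorm φ p μ * lpNorm f q μ := by
  have hφf : MemLp (φ • f) 1 μ := hf.smul hφ
  calc ‖∫ x, φ x • f x ∂μ‖
      ≤ lpNorm (φ • f) 1 μ :=
        (norm_integral_le_integral_norm _).trans_eq
          (lpNorm_one_eq_integral_norm hφf.aestronglyMeasurable).symm
    _ ≤ lpNorm φ p μ * lpNorm f q μ := by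
        rw [← toReal_eLpNorm hφf.aestronglyMeasurable, ← toReal_eLpNorm hφ.aestronglyMeasurable,
          ← toReal_eLpNorm hf.aestronglyMeasurable, ← ENNReal.toReal_mul]
        exact ENNReal.toReal_mono (ENNReal.mul_ne_top hφ.eLpNorm_ne_top hf.eLpNorm_ne_top)
          (eLpNorm_smul_le_mul_eLpNorm hf.aestronglyMeasurable hφ.aestronglyMeasurable)

lemma memLp_restrict_of_continuousOn_of_isCompact [TopologicalSpace X] [OpensMeasurableSpace X]
    [SecondCountableTopologyEither X E] [IsFiniteMeasureOnCompacts μ] {p : ENNReal} {f : X → E}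
    {S : Set X} (hS : IsCompact S) (hSm : MeasurableSet S) (hf : ContinuousOn f S) :
    MemLp f p (μ.restrict S) := by
  have : IsFiniteMeasure (μ.restrict S) := isFiniteMeasure_restrict.2 hS.measure_ne_top
  obtain ⟨M, hM⟩ := hS.exists_bound_of_continuousOn hf
  exact .of_bound (hf.aestronglyMeasurable hSm) M (ae_restrict_of_forall_mem hSm hM)

end Lp

section MeanValue

variable {E : Type*} [NormedAddCommGroup E]

lemma norm_sub_le_of_norm_deriv_le_div_sqrt [NormedSpace ℝ E] {g g' : ℝ → E} {K s l : ℝ}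
    (hs : 0 < s) (hl : 0 ≤ l)
    (hg : ∀ t ∈ Icc s (s + l), HasDerivWithinAt g (g' t) (Icc s (s + l)) t)
    (hg' : ∀ t ∈ Icc s (s + l), ‖g' t‖ ≤ K / √t) :
    ‖g (s + l) - g s‖ ≤ 2 * K * √l := by
  have hK : 0 ≤ K := by
    have := (norm_nonneg _).trans (hg' s (left_mem_Icc.2 (by linarith)))
    simpa [div_mul_cancel₀ K (sqrt_pos.2 hs).ne'] using mul_nonneg this (sqrt_nonneg s)
  have hB (t : ℝ) (ht : 0 < t) :
      HasDerivAt (fun t ↦ 2 * K * (√t - √s)) (K / √t) t :=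
    (((hasDerivAt_sqrt ht.ne').sub_const (√s)).const_mul (2 * K)).congr_deriv (by ring)
  have hpos {t : ℝ} (ht : t ∈ Icc s (s + l)) : 0 < t := hs.trans_le ht.1
  have hIci {t : ℝ} (ht : t ∈ Ico s (s + l)) : Icc s (s + l) ∈ nhdsWithin t (Ici t) :=
    Filter.mem_of_superset (Icc_mem_nhdsGE ht.2) (Icc_subset_Icc_left ht.1)
  calc ‖g (s + l) - g s‖
      ≤ 2 * K * (√(s + l) - √s) :=
        image_norm_le_of_norm_deriv_right_le_deriv_boundary'
          (fun t ht ↦ ((hg t ht).sub_const (g s)).continuousWithinAt)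
          (fun t ht ↦ ((hg t (Ico_subset_Icc_self ht)).sub_const (g s)).mono_of_mem_nhdsWithin
            (hIci ht))
          (by simp)
          (fun t ht ↦ (hB t (hpos ht)).continuousAt.continuousWithinAt)
          (fun t ht ↦ (hB t (hpos (Ico_subset_Icc_self ht))).hasDerivWithinAt)
          (fun t ht ↦ hg' t (Ico_subset_Icc_self ht)) (right_mem_Icc.2 (by linarith))
    _ ≤ 2 * K * √l := by
        gcongr
        rw [sub_le_iff_le_add, sqrt_le_left (by positivity)]
        nlinarith [sq_sqrt hs.le, sq_sqrt hl, mul_nonneg (sqrt_nonneg s) (sqrt_nonneg l)]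

lemma exists_le_abs_im_norm_sub_le_of_norm_deriv_le_div_sqrt [NormedSpace ℂ E] {F F' : ℂ → E}
    {K l : ℝ} {c : ℂ} (hl : 0 ≤ l) (hc : c.im ≠ 0)
    (hF : ∀ z : ℂ, z.im ≠ 0 → HasDerivAt F (F' z) z)
    (hF' : ∀ z : ℂ, z.im ≠ 0 → ‖F' z‖ ≤ K / √|z.im|) :
    ∃ w : ℂ, l ≤ |w.im| ∧ ‖F w - F c‖ ≤ 2 * K * √l := by
  -- `γ t` is the point at distance `t` from the real axis on the vertical ray through `c`.
  set s := |c.im|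
  have hs : 0 < s := abs_pos.2 hc
  set σ := c.im / s
  have hσ : |σ| = 1 := by rw [abs_div, abs_abs, div_self hs.ne']
  let γ (t : ℝ) : ℂ := c.re + (σ * Complex.I) * t
  have hγs : γ s = c := by apply Complex.ext <;> simp [γ, σ, hs.ne']
  have hγim {t : ℝ} (ht : 0 < t) : |(γ t).im| = t := by
    simp [γ, abs_mul, hσ, abs_of_pos ht]
  have hγim0 {t : ℝ} (ht : 0 < t) : (γ t).im ≠ 0 := abs_pos.1 (by rwa [hγim ht])
  have hγ (t : ℝ) : HasDerivAt γ (σ * Complex.I) t :=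
    (((hasDerivAt_id t).ofReal_comp.const_mul (σ * Complex.I)).const_add _).congr_deriv
      (by simp)
  refine ⟨γ (s + l), by rw [hγim (by positivity)]; linarith, ?_⟩
  rw [← hγs]
  refine norm_sub_le_of_norm_deriv_le_div_sqrt (g := F ∘ γ) hs hl
    (fun t ht ↦ ((hF _ (hγim0 (hs.trans_le ht.1))).scomp t (hγ t)).hasDerivWithinAt)
    fun t ht ↦ ?_
  have ht0 : 0 < t := hs.trans_le ht.1
  simpa [norm_smul, hσ, hγim ht0] using hF' (γ t) (hγim0 ht0)

end MeanValue

section Resolvent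

lemma ofReal_sub_ne_zero {z : ℂ} (hz : z.im ≠ 0) (t : ℝ) : (t : ℂ) - z ≠ 0 :=
  fun h ↦ hz (by simpa using congrArg Complex.im h)

lemma norm_inv_ofReal_sub_sq (t : ℝ) (z : ℂ) :
    ‖((t : ℂ) - z)⁻¹‖ ^ 2 = ((t - z.re) ^ 2 + z.im ^ 2)⁻¹ := by
  rw [norm_inv, inv_pow, Complex.sq_norm, Complex.normSq_apply]
  simp [sq]

lemma norm_inv_ofReal_sub_le (t : ℝ) {z : ℂ} (hz : z.im ≠ 0) :
    ‖((t : ℂ) - z)⁻¹‖ ≤ |z.im|⁻¹ := by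
  rw [norm_inv]
  exact inv_anti₀ (abs_pos.2 hz) (by simpa using Complex.abs_im_le_norm ((t : ℂ) - z))

lemma continuousOn_inv_ofReal_sub {X : Type*} [TopologicalSpace X] {u : X → ℝ} {S : Set X} {z : ℂ}
    (hz : z.im ≠ 0) (hu : ContinuousOn u S) :
    ContinuousOn (fun y ↦ ((u y : ℂ) - z)⁻¹) S :=
  ContinuousOn.inv₀ (by fun_prop) fun y _ ↦ ofReal_sub_ne_zero hz (u y)

lemma hasDerivAt_integral_inv_ofReal_sub_smul {X E : Type*} [MeasurableSpace X] {μ : Measure X}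
    [NormedAddCommGroup E] [NormedSpace ℂ E] {u : X → ℝ} {f : X → E} {z : ℂ}
    (hu : AEStronglyMeasurable u μ) (hf : Integrable f μ) (hz : z.im ≠ 0) :
    HasDerivAt (fun w ↦ ∫ x, ((u x : ℂ) - w)⁻¹ • f x ∂μ)
      (∫ x, ((u x : ℂ) - z)⁻¹ ^ 2 • f x ∂μ) z := by
  have hmeas (w : ℂ) : AEStronglyMeasurable (fun x ↦ ((u x : ℂ) - w)⁻¹) μ := by
    have := hu.aemeasurable
    exact AEMeasurable.aestronglyMeasurable (by fun_prop)
  have hnhds : {w : ℂ | |z.im| / 2 < |w.im|} ∈ nhds z :=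
    (isOpen_lt continuous_const (by fun_prop)).mem_nhds (half_lt_self (abs_pos.2 hz))
  have him {w : ℂ} (hw : w ∈ {w : ℂ | |z.im| / 2 < |w.im|}) : w.im ≠ 0 :=
    abs_pos.1 ((half_pos (abs_pos.2 hz)).trans hw)
  refine (hasDerivAt_integral_of_dominated_loc_of_deriv_le hnhds
    (bound := fun x ↦ (|z.im| / 2)⁻¹ ^ 2 * ‖f x‖)
    (F' := fun w x ↦ ((u x : ℂ) - w)⁻¹ ^ 2 • f x) ?_ ?_ ?_ ?_ ?_ ?_).2
  · exact .of_forall fun w ↦ (hmeas w).smul hf.aestronglyMeasurable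
  · exact hf.bdd_smul (|z.im|⁻¹) (hmeas z)
      (.of_forall fun x ↦ norm_inv_ofReal_sub_le (u x) hz)
  · exact ((hmeas z).pow 2).smul hf.aestronglyMeasurable
  · refine .of_forall fun x w hw ↦ ?_
    rw [norm_smul, norm_pow]
    gcongr
    exact (norm_inv_ofReal_sub_le (u x) (him hw)).trans
      (inv_anti₀ (half_pos (abs_pos.2 hz)) hw.le)
  · exact hf.norm.const_mul _
  · refine .of_forall fun x w hw ↦ ?_
    have hinv := ((hasDerivAt_id w).const_sub (u x : ℂ)).fun_inv (ofReal_sub_ne_zero (him hw) _)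
    simpa using hinv.smul_const (f x)

end Resolvent

section MonotoneSubstitution

variable {a b c₀ : ℝ} {u u' : ℝ → ℝ}

lemma mul_setIntegral_le_abs_setIntegral_deriv_mul {s : Set ℝ} {g : ℝ → ℝ} (hs : Convex ℝ s)
    (hc₀ : 0 < c₀) (hu : ∀ y ∈ s, HasDerivWithinAt u (u' y) s y) (hu' : ∀ y ∈ s, c₀ ≤ |u' y|)
    (hg : ∀ y ∈ s, 0 ≤ g y) (hgi : IntegrableOn g s) (hgi' : IntegrableOn (fun y ↦ u' y * g y) s) :
    c₀ * ∫ y in s, g y ≤ |∫ y in s, u' y * g y| := by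
  have hsm : MeasurableSet s := hs.ordConnected.measurableSet
  have hne : ∀ y ∈ s, u' y ≠ 0 := fun y hy ↦ abs_pos.1 (hc₀.trans_le (hu' y hy))
  rw [← integral_const_mul]
  obtain hneg | hpos := hasDerivWithinAt_forall_lt_or_forall_gt_of_forall_ne hs hu hne
  · refine le_trans ?_ (neg_le_abs _)
    rw [← integral_neg]
    refine setIntegral_mono_on (hgi.const_mul c₀) hgi'.neg hsm fun y hy ↦ ?_
    rw [← neg_mul, ← abs_of_neg (hneg y hy)]
    exact mul_le_mul_of_nonneg_right (hu' y hy) (hg y hy)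
  · refine le_trans ?_ (le_abs_self _)
    refine setIntegral_mono_on (hgi.const_mul c₀) hgi' hsm fun y hy ↦ ?_
    rw [← abs_of_pos (hpos y hy)]
    exact mul_le_mul_of_nonneg_right (hu' y hy) (hg y hy)

lemma continuousOn_inv_sq_add_sq {X : Type*} [TopologicalSpace X] {u : X → ℝ} {S : Set X} {r s : ℝ}
    (hs : s ≠ 0) (hu : ContinuousOn u S) : ContinuousOn (fun y ↦ ((u y - r) ^ 2 + s ^ 2)⁻¹) S :=
  ContinuousOn.inv₀ (by fun_prop) fun y _ ↦ by positivity

lemma abs_arctan_sub_arctan_le (x y : ℝ) : |arctan x - arctan y| ≤ π := by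
  obtain ⟨hx, hx'⟩ := arctan_mem_Ioo x
  obtain ⟨hy, hy'⟩ := arctan_mem_Ioo y
  rw [abs_le]
  constructor <;> linarith

lemma abs_setIntegral_deriv_mul_inv_sq_add_sq_le {r s : ℝ} (hab : a ≤ b) (hs : s ≠ 0)
    (hu : ∀ y ∈ Icc a b, HasDerivWithinAt u (u' y) (Icc a b) y) (hu' : ContinuousOn u' (Icc a b)) :
    |∫ y in Icc a b, u' y * ((u y - r) ^ 2 + s ^ 2)⁻¹| ≤ π / |s| := by
  have huc : ContinuousOn u (Icc a b) := fun y hy ↦ (hu y hy).continuousWithinAt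
  have hprim : ∀ y ∈ Icc a b, HasDerivWithinAt (fun y ↦ s⁻¹ * arctan ((u y - r) / s))
      (u' y * ((u y - r) ^ 2 + s ^ 2)⁻¹) (Icc a b) y := by
    intro y hy
    refine (((((hu y hy).sub_const r).div_const s).arctan).const_mul s⁻¹).congr_deriv ?_
    have : (u y - r) ^ 2 + s ^ 2 ≠ 0 := by positivity
    have : 1 + ((u y - r) / s) ^ 2 ≠ 0 := by positivity
    field_simp
    ring
  have hint : IntervalIntegrable (fun y ↦ u' y * ((u y - r) ^ 2 + s ^ 2)⁻¹) volume a b :=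
    ContinuousOn.intervalIntegrable_of_Icc hab (hu'.mul (continuousOn_inv_sq_add_sq hs huc))
  rw [integral_Icc_eq_integral_Ioc, ← intervalIntegral.integral_of_le hab,
    intervalIntegral.integral_eq_sub_of_hasDerivAt_of_le hab
      (fun y hy ↦ (hprim y hy).continuousWithinAt)
      (fun y hy ↦ (hprim y (Ioo_subset_Icc_self hy)).hasDerivAt (Icc_mem_nhds hy.1 hy.2)) hint,
    ← mul_sub, abs_mul, abs_inv, mul_comm, ← div_eq_mul_inv]
  gcongr
  exact abs_arctan_sub_arctan_le _ _

end MonotoneSubstitution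

section Kernel

variable {a b c₀ : ℝ} {u u' : ℝ → ℝ} {z : ℂ}

lemma lpNorm_inv_ofReal_sub_le (hab : a ≤ b) (hc₀ : 0 < c₀) (hz : z.im ≠ 0)
    (hu : ∀ y ∈ Icc a b, HasDerivWithinAt u (u' y) (Icc a b) y) (hu'c : ContinuousOn u' (Icc a b))
    (hu' : ∀ y ∈ Icc a b, c₀ ≤ |u' y|) :
    lpNorm (fun y ↦ ((u y : ℂ) - z)⁻¹) 2 (volume.restrict (Icc a b)) ≤ √(π / (c₀ * |z.im|)) := by
  have huc : ContinuousOn u (Icc a b) := fun y hy ↦ (hu y hy).continuousWithinAt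
  have hk := continuousOn_inv_sq_add_sq (r := z.re) hz huc
  rw [lpNorm_two_eq_sqrt_integral_norm_sq
    ((continuousOn_inv_ofReal_sub hz huc).aestronglyMeasurable measurableSet_Icc)]
  simp_rw [norm_inv_ofReal_sub_sq]
  gcongr
  rw [mul_comm c₀, ← div_div, le_div_iff₀' hc₀]
  exact (mul_setIntegral_le_abs_setIntegral_deriv_mul (convex_Icc a b) hc₀ hu hu'
    (fun y _ ↦ by positivity) hk.integrableOn_Icc (hu'c.mul hk).integrableOn_Icc).trans
    (abs_setIntegral_deriv_mul_inv_sq_add_sq_le hab hz hu hu'c)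

variable {E : Type*} [NormedAddCommGroup E] [NormedSpace ℂ E]

lemma norm_integral_inv_ofReal_sub_smul_le_mul_lpNorm {g : ℝ → E} (hab : a ≤ b) (hc₀ : 0 < c₀)
    (hz : z.im ≠ 0) (hu : ∀ y ∈ Icc a b, HasDerivWithinAt u (u' y) (Icc a b) y)
    (hu'c : ContinuousOn u' (Icc a b)) (hu' : ∀ y ∈ Icc a b, c₀ ≤ |u' y|)
    (hg : MemLp g 2 (volume.restrict (Icc a b))) :
    ‖∫ y in Icc a b, ((u y : ℂ) - z)⁻¹ • g y‖ ≤
      √(π / (c₀ * |z.im|)) * lpNorm g 2 (volume.restrict (Icc a b)) := by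
  have huc : ContinuousOn u (Icc a b) := fun y hy ↦ (hu y hy).continuousWithinAt
  have hk : MemLp (fun y ↦ ((u y : ℂ) - z)⁻¹) 2 (volume.restrict (Icc a b)) :=
    .of_bound ((continuousOn_inv_ofReal_sub hz huc).aestronglyMeasurable measurableSet_Icc)
      |z.im|⁻¹ (.of_forall fun y ↦ norm_inv_ofReal_sub_le (u y) hz)
  exact (norm_integral_smul_le_lpNorm_mul_lpNorm hk hg).trans
    (mul_le_mul_of_nonneg_right (lpNorm_inv_ofReal_sub_le hab hc₀ hz hu hu'c hu') lpNorm_nonneg)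

lemma integral_deriv_mul_inv_ofReal_sub_sq_smul [CompleteSpace E] {g g' : ℝ → E} (hab : a ≤ b)
    (hz : z.im ≠ 0) (hu : ∀ y ∈ Icc a b, HasDerivWithinAt u (u' y) (Icc a b) y)
    (hu' : ContinuousOn u' (Icc a b))
    (hg : ∀ y ∈ Icc a b, HasDerivWithinAt g (g' y) (Icc a b) y) (hga : g a = 0) (hgb : g b = 0)
    (hg' : IntegrableOn g' (Icc a b)) :
    ∫ y in Icc a b, (u' y * ((u y : ℂ) - z)⁻¹ ^ 2) • g y =
      ∫ y in Icc a b, ((u y : ℂ) - z)⁻¹ • g' y := by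
  have huc : ContinuousOn u (Icc a b) := fun y hy ↦ (hu y hy).continuousWithinAt
  have hv : ∀ y ∈ Icc a b, HasDerivWithinAt (fun y ↦ ((u y : ℂ) - z)⁻¹)
      (-(u' y * ((u y : ℂ) - z)⁻¹ ^ 2)) (Icc a b) y := fun y hy ↦
    (((hu y hy).ofReal_comp.sub_const z).fun_inv (ofReal_sub_ne_zero hz (u y))).congr_deriv
      (by rw [inv_pow, neg_div, div_eq_mul_inv])
  have hv' : ContinuousOn (fun y ↦ -(u' y * ((u y : ℂ) - z)⁻¹ ^ 2)) (Icc a b) := by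
    have := continuousOn_inv_ofReal_sub hz huc
    fun_prop
  have hparts := intervalIntegral.integral_smul_deriv_eq_deriv_smul_of_hasDerivWithinAt
    (by rwa [uIcc_of_le hab]) (by rwa [uIcc_of_le hab])
    (hv'.intervalIntegrable_of_Icc hab) ((intervalIntegrable_iff_integrableOn_Icc_of_le hab).2 hg')
  simpa [hga, hgb, intervalIntegral.integral_of_le hab, integral_Icc_eq_integral_Ioc,
    integral_neg] using hparts.symm

lemma integral_inv_ofReal_sub_sq_smul [CompleteSpace E] {u'' : ℝ → ℝ} {f f' : ℝ → E}
    (hab : a ≤ b) (hz : z.im ≠ 0) (hu : ∀ y ∈ Icc a b, HasDerivWithinAt u (u' y) (Icc a b) y)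
    (hu' : ∀ y ∈ Icc a b, HasDerivWithinAt u' (u'' y) (Icc a b) y)
    (hf : ∀ y ∈ Icc a b, HasDerivWithinAt f (f' y) (Icc a b) y) (hu'0 : ∀ y ∈ Icc a b, u' y ≠ 0)
    (hfa : f a = 0) (hfb : f b = 0)
    (hint : IntegrableOn (fun y ↦ (u' y)⁻¹ • f' y - (u'' y / u' y ^ 2) • f y) (Icc a b)) :
    ∫ y in Icc a b, ((u y : ℂ) - z)⁻¹ ^ 2 • f y =
      ∫ y in Icc a b, ((u y : ℂ) - z)⁻¹ • ((u' y)⁻¹ • f' y - (u'' y / u' y ^ 2) • f y) := by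
  have hu'cont : ContinuousOn u' (Icc a b) := fun y hy ↦ (hu' y hy).continuousWithinAt
  have hg : ∀ y ∈ Icc a b, HasDerivWithinAt (fun y ↦ (u' y)⁻¹ • f y)
      ((u' y)⁻¹ • f' y - (u'' y / u' y ^ 2) • f y) (Icc a b) y := fun y hy ↦
    (((hu' y hy).fun_inv (hu'0 y hy)).smul (hf y hy)).congr_deriv
      (by rw [neg_div, neg_smul, ← sub_eq_add_neg])
  rw [← integral_deriv_mul_inv_ofReal_sub_sq_smul hab hz hu hu'cont hg (by simp [hfa])
    (by simp [hfb]) hint]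
  refine setIntegral_congr_fun measurableSet_Icc fun y hy ↦ ?_
  have : (u' y : ℂ) ≠ 0 := Complex.ofReal_ne_zero.2 (hu'0 y hy)
  rw [← Complex.coe_smul (u' y)⁻¹, smul_smul, mul_right_comm, Complex.ofReal_inv,
    mul_inv_cancel₀ this, one_mul]

end Kernel

section Quotient

lemma aestronglyMeasurable_of_hasDerivWithinAt_Icc {E : Type*} [NormedAddCommGroup E]
    [NormedSpace ℝ E] [CompleteSpace E] {a b : ℝ} {f f' : ℝ → E}
    (hf : ∀ y ∈ Icc a b, HasDerivWithinAt f (f' y) (Icc a b) y) :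
    AEStronglyMeasurable f' (volume.restrict (Icc a b)) := by
  rw [← Measure.restrict_congr_set Ioo_ae_eq_Icc]
  refine (aestronglyMeasurable_deriv f _).congr ?_
  filter_upwards [ae_restrict_mem measurableSet_Ioo] with y hy
  exact ((hf y (Ioo_subset_Icc_self hy)).hasDerivAt (Icc_mem_nhds hy.1 hy.2)).deriv

variable {X E : Type*} [MeasurableSpace X] {μ : Measure X} {p : ENNReal} [NormedAddCommGroup E]
  [NormedSpace ℝ E] {φ ψ : X → ℝ} {f g : X → E} {c₀ C₀ : ℝ}

lemma norm_inv_smul_le {t : ℝ} (hc₀ : 0 < c₀) (ht : c₀ ≤ |t|) (v : E) :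
    ‖t⁻¹ • v‖ ≤ c₀⁻¹ * ‖v‖ := by
  rw [norm_smul, norm_inv, norm_eq_abs]
  gcongr

lemma norm_div_sq_smul_le {r t : ℝ} (hc₀ : 0 < c₀) (ht : c₀ ≤ |t|) (hr : |r| ≤ C₀) (v : E) :
    ‖(r / t ^ 2) • v‖ ≤ C₀ / c₀ ^ 2 * ‖v‖ := by
  rw [norm_smul, norm_div, norm_pow, norm_eq_abs, norm_eq_abs]
  have := (abs_nonneg r).trans hr
  gcongr

lemma memLp_inv_smul (hc₀ : 0 < c₀) (hφ : AEStronglyMeasurable φ μ) (hφc : ∀ᵐ x ∂μ, c₀ ≤ |φ x|)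
    (hg : MemLp g p μ) : MemLp (fun x ↦ (φ x)⁻¹ • g x) p μ :=
  hg.of_le_mul (hφ.aemeasurable.inv.aestronglyMeasurable.smul hg.aestronglyMeasurable)
    (hφc.mono fun x hx ↦ norm_inv_smul_le hc₀ hx (g x))

lemma memLp_div_sq_smul (hc₀ : 0 < c₀) (hφ : AEStronglyMeasurable φ μ)
    (hφc : ∀ᵐ x ∂μ, c₀ ≤ |φ x|) (hψ : AEStronglyMeasurable ψ μ) (hψC : ∀ᵐ x ∂μ, |ψ x| ≤ C₀)
    (hf : MemLp f p μ) : MemLp (fun x ↦ (ψ x / φ x ^ 2) • f x) p μ := by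
  refine hf.of_le_mul (c := C₀ / c₀ ^ 2) ?_ ?_
  · exact (hψ.aemeasurable.div (hφ.aemeasurable.pow_const 2)).aestronglyMeasurable.smul
      hf.aestronglyMeasurable
  · filter_upwards [hφc, hψC] with x hφx hψx using norm_div_sq_smul_le hc₀ hφx hψx (f x)

lemma lpNorm_inv_smul_sub_div_sq_smul_le (hp : 1 ≤ p) (hc₀ : 0 < c₀) (hC₀ : 0 ≤ C₀)
    (hφ : AEStronglyMeasurable φ μ) (hφc : ∀ᵐ x ∂μ, c₀ ≤ |φ x|)
    (hψC : ∀ᵐ x ∂μ, |ψ x| ≤ C₀) (hf : MemLp f p μ) (hg : MemLp g p μ) :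
    lpNorm (fun x ↦ (φ x)⁻¹ • g x - (ψ x / φ x ^ 2) • f x) p μ ≤
      c₀⁻¹ * lpNorm g p μ + C₀ / c₀ ^ 2 * lpNorm f p μ := by
  refine (lpNorm_sub_le (memLp_inv_smul hc₀ hφ hφc hg) hp).trans (add_le_add ?_ ?_)
  · exact lpNorm_le_mul_lpNorm_of_ae_le_mul (by positivity) hg
      (hφc.mono fun x hx ↦ norm_inv_smul_le hc₀ hx (g x))
  · refine lpNorm_le_mul_lpNorm_of_ae_le_mul (by positivity) hf ?_
    filter_upwards [hφc, hψC] with x hφx hψx using norm_div_sq_smul_le hc₀ hφx hψx (f x)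

end Quotient

section LimitingAbsorption

variable {E : Type*} [NormedAddCommGroup E] [NormedSpace ℂ E] [CompleteSpace E]
  {a b c₀ C₀ : ℝ} {u u' u'' : ℝ → ℝ} {f f' : ℝ → E}

lemma norm_integral_inv_ofReal_sub_sq_smul_le {z : ℂ} (hab : a ≤ b) (hc₀ : 0 < c₀) (hz : z.im ≠ 0)
    (hu : ∀ y ∈ Icc a b, HasDerivWithinAt u (u' y) (Icc a b) y)
    (hu' : ∀ y ∈ Icc a b, HasDerivWithinAt u' (u'' y) (Icc a b) y)
    (hf : ∀ y ∈ Icc a b, HasDerivWithinAt f (f' y) (Icc a b) y)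
    (hu'c : ∀ y ∈ Icc a b, c₀ ≤ |u' y|) (hu''C : ∀ y ∈ Icc a b, |u'' y| ≤ C₀)
    (hf' : MemLp f' 2 (volume.restrict (Icc a b))) (hfa : f a = 0) (hfb : f b = 0) :
    ‖∫ y in Icc a b, ((u y : ℂ) - z)⁻¹ ^ 2 • f y‖ ≤
      √(π / (c₀ * |z.im|)) * (c₀⁻¹ * lpNorm f' 2 (volume.restrict (Icc a b)) +
        C₀ / c₀ ^ 2 * lpNorm f 2 (volume.restrict (Icc a b))) := by
  have hu'cont : ContinuousOn u' (Icc a b) := fun y hy ↦ (hu' y hy).continuousWithinAt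
  have hfcont : ContinuousOn f (Icc a b) := fun y hy ↦ (hf y hy).continuousWithinAt
  have hC₀ : 0 ≤ C₀ := (abs_nonneg _).trans (hu''C a (left_mem_Icc.2 hab))
  have hu'0 : ∀ y ∈ Icc a b, u' y ≠ 0 := fun y hy ↦ abs_pos.1 (hc₀.trans_le (hu'c y hy))
  have hfL : MemLp f 2 (volume.restrict (Icc a b)) :=
    memLp_restrict_of_continuousOn_of_isCompact isCompact_Icc measurableSet_Icc hfcont
  have hu'm := hu'cont.aestronglyMeasurable measurableSet_Icc (μ := volume)
  have hu''m := aestronglyMeasurable_of_hasDerivWithinAt_Icc hu'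
  have hu'c_ae : ∀ᵐ y ∂volume.restrict (Icc a b), c₀ ≤ |u' y| :=
    ae_restrict_of_forall_mem measurableSet_Icc hu'c
  have hu''C_ae : ∀ᵐ y ∂volume.restrict (Icc a b), |u'' y| ≤ C₀ :=
    ae_restrict_of_forall_mem measurableSet_Icc hu''C
  have hg'L : MemLp (fun y ↦ (u' y)⁻¹ • f' y - (u'' y / u' y ^ 2) • f y) 2
      (volume.restrict (Icc a b)) :=
    (memLp_inv_smul hc₀ hu'm hu'c_ae hf').sub
      (memLp_div_sq_smul hc₀ hu'm hu'c_ae hu''m hu''C_ae hfL)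
  rw [integral_inv_ofReal_sub_sq_smul hab hz hu hu' hf hu'0 hfa hfb (hg'L.integrable one_le_two)]
  refine (norm_integral_inv_ofReal_sub_smul_le_mul_lpNorm hab hc₀ hz hu hu'cont hu'c hg'L).trans ?_
  gcongr
  exact lpNorm_inv_smul_sub_div_sq_smul_le one_le_two hc₀ hC₀ hu'm hu'c_ae hu''C_ae hfL hf'

lemma norm_integral_inv_ofReal_sub_smul_le_add_mul_sqrt {c : ℂ} {l : ℝ} (hab : a ≤ b) (hc₀ : 0 < c₀)
    (hc : c.im ≠ 0) (hl : 0 < l)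
    (hu : ∀ y ∈ Icc a b, HasDerivWithinAt u (u' y) (Icc a b) y)
    (hu' : ∀ y ∈ Icc a b, HasDerivWithinAt u' (u'' y) (Icc a b) y)
    (hf : ∀ y ∈ Icc a b, HasDerivWithinAt f (f' y) (Icc a b) y)
    (hu'c : ∀ y ∈ Icc a b, c₀ ≤ |u' y|) (hu''C : ∀ y ∈ Icc a b, |u'' y| ≤ C₀)
    (hf' : MemLp f' 2 (volume.restrict (Icc a b))) (hfa : f a = 0) (hfb : f b = 0) :
    ‖∫ y in Icc a b, ((u y : ℂ) - c)⁻¹ • f y‖ ≤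
      √(π / (c₀ * l)) * lpNorm f 2 (volume.restrict (Icc a b)) +
      2 * (√(π / c₀) * (c₀⁻¹ * lpNorm f' 2 (volume.restrict (Icc a b)) +
        C₀ / c₀ ^ 2 * lpNorm f 2 (volume.restrict (Icc a b)))) * √l := by
  have hucont : ContinuousOn u (Icc a b) := fun y hy ↦ (hu y hy).continuousWithinAt
  have hu'cont : ContinuousOn u' (Icc a b) := fun y hy ↦ (hu' y hy).continuousWithinAt
  have hfcont : ContinuousOn f (Icc a b) := fun y hy ↦ (hf y hy).continuousWithinAt
  set N := lpNorm f 2 (volume.restrict (Icc a b))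
  set N' := lpNorm f' 2 (volume.restrict (Icc a b))
  have hN : 0 ≤ N := lpNorm_nonneg
  obtain ⟨w, hlw, hwc⟩ := exists_le_abs_im_norm_sub_le_of_norm_deriv_le_div_sqrt
    (F := fun z ↦ ∫ y in Icc a b, ((u y : ℂ) - z)⁻¹ • f y)
    (F' := fun z ↦ ∫ y in Icc a b, ((u y : ℂ) - z)⁻¹ ^ 2 • f y)
    (K := √(π / c₀) * (c₀⁻¹ * N' + C₀ / c₀ ^ 2 * N)) hl.le hc
    (fun z hz ↦ hasDerivAt_integral_inv_ofReal_sub_smul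
      (hucont.aestronglyMeasurable measurableSet_Icc) hfcont.integrableOn_Icc hz)
    (fun z hz ↦ (norm_integral_inv_ofReal_sub_sq_smul_le hab hc₀ hz hu hu' hf hu'c hu''C hf' hfa
      hfb).trans_eq (by rw [← div_div, sqrt_div' _ (abs_nonneg _), div_mul_eq_mul_div]))
  have hw : w.im ≠ 0 := abs_pos.1 (hl.trans_le hlw)
  have hFw : ‖∫ y in Icc a b, ((u y : ℂ) - w)⁻¹ • f y‖ ≤ √(π / (c₀ * l)) * N :=
    (norm_integral_inv_ofReal_sub_smul_le_mul_lpNorm hab hc₀ hw hu hu'cont hu'c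
      (memLp_restrict_of_continuousOn_of_isCompact isCompact_Icc measurableSet_Icc hfcont)).trans
      (by gcongr)
  exact (norm_le_norm_add_norm_sub _ _).trans (add_le_add hFw hwc)

lemma norm_integral_inv_ofReal_sub_smul_le_rpow {c : ℂ} {α : ℝ} (hab : a ≤ b) (hc₀ : 0 < c₀)
    (hc : c.im ≠ 0) (hα : 0 < α)
    (hu : ∀ y ∈ Icc a b, HasDerivWithinAt u (u' y) (Icc a b) y)
    (hu' : ∀ y ∈ Icc a b, HasDerivWithinAt u' (u'' y) (Icc a b) y)
    (hf : ∀ y ∈ Icc a b, HasDerivWithinAt f (f' y) (Icc a b) y)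
    (hu'c : ∀ y ∈ Icc a b, c₀ ≤ |u' y|) (hu''C : ∀ y ∈ Icc a b, |u'' y| ≤ C₀)
    (hf' : MemLp f' 2 (volume.restrict (Icc a b))) (hfa : f a = 0) (hfb : f b = 0) :
    ‖∫ y in Icc a b, ((u y : ℂ) - c)⁻¹ • f y‖ ≤
      √π * c₀⁻¹ * α ^ (-(1 : ℝ) / 2) * (2 * lpNorm f' 2 (volume.restrict (Icc a b)) +
        (α + 2 * C₀ * c₀⁻¹) * lpNorm f 2 (volume.restrict (Icc a b))) := by
  have hsqrt : √(π / (c₀ * (c₀ / α))) = √π * c₀⁻¹ * √α := by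
    rw [show π / (c₀ * (c₀ / α)) = π * α / c₀ ^ 2 by field_simp, sqrt_div (by positivity),
      sqrt_mul pi_nonneg, sqrt_sq hc₀.le]
    ring
  have hsqrt' : √(π / c₀) * √(c₀ / α) = √π * (√α)⁻¹ := by
    rw [← sqrt_mul (by positivity), div_mul_div_cancel₀ hc₀.ne', sqrt_div pi_nonneg,
      div_eq_mul_inv]
  have hrpow : α ^ (-(1 : ℝ) / 2) = (√α)⁻¹ := by
    rw [neg_div, rpow_neg hα.le, sqrt_eq_rpow]
  -- The height `l = c₀ / α` gives `‖f'‖` and `α ‖f‖` comparable coefficients.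
  refine (norm_integral_inv_ofReal_sub_smul_le_add_mul_sqrt hab hc₀ hc (div_pos hc₀ hα) hu hu' hf
    hu'c hu''C hf' hfa hfb).trans_eq ?_
  set N := lpNorm f 2 (volume.restrict (Icc a b))
  set N' := lpNorm f' 2 (volume.restrict (Icc a b))
  calc _ = √π * c₀⁻¹ * √α * N +
        2 * (√(π / c₀) * √(c₀ / α)) * (c₀⁻¹ * N' + C₀ / c₀ ^ 2 * N) := by rw [hsqrt]; ring
    _ = √π * c₀⁻¹ * (√α)⁻¹ * (2 * N' + (√α ^ 2 + 2 * C₀ * c₀⁻¹) * N) := by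
        rw [hsqrt']
        field_simp
        ring
    _ = _ := by rw [hrpow, sq_sqrt hα.le]

end LimitingAbsorption

theorem hardy_type_limiting_absorption_general {E : Type*} [NormedAddCommGroup E] [NormedSpace ℂ E]
    [CompleteSpace E] {a b c₀ C₀ α : ℝ} {u u' u'' : ℝ → ℝ} {f f' : ℝ → E} {c : ℂ}
    (hab : a ≤ b) (hc₀ : 0 < c₀) (hc : c.im ≠ 0) (hα : 0 < α)
    (hu : ∀ y ∈ Icc a b, HasDerivWithinAt u (u' y) (Icc a b) y)
    (hu' : ∀ y ∈ Icc a b, HasDerivWithinAt u' (u'' y) (Icc a b) y)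
    (hf : ∀ y ∈ Icc a b, HasDerivWithinAt f (f' y) (Icc a b) y)
    (hu'c : ∀ y ∈ Icc a b, c₀ ≤ |u' y|) (hu''C : ∀ y ∈ Icc a b, |u'' y| ≤ C₀)
    (hf' : MemLp f' 2 (volume.restrict (Icc a b))) (hfa : f a = 0) (hfb : f b = 0) :
    (‖∫ y in a..b, ((u y : ℂ) - c)⁻¹ • f y‖ ≤
      2 * √π * (1 + C₀) * c₀⁻¹ * α ^ (-(1 : ℝ) / 2) *
        (√(∫ y in a..b, ‖f' y‖ ^ 2) + α * √(∫ y in a..b, ‖f y‖ ^ 2) +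
          c₀⁻¹ * √(∫ y in a..b, ‖f y‖ ^ 2))) ∧
    (c₀⁻¹ ≤ α →
      ‖∫ y in a..b, ((u y : ℂ) - c)⁻¹ • f y‖ ≤
        2 * √π * (1 + C₀) * c₀⁻¹ * α ^ (-(1 : ℝ) / 2) *
          (√(∫ y in a..b, ‖f' y‖ ^ 2) + α * √(∫ y in a..b, ‖f y‖ ^ 2))) := by
  have hC₀ : 0 ≤ C₀ := (abs_nonneg _).trans (hu''C a (left_mem_Icc.2 hab))
  have hfm : AEStronglyMeasurable f (volume.restrict (Icc a b)) :=
    ContinuousOn.aestronglyMeasurable (fun y hy ↦ (hf y hy).continuousWithinAt) measurableSet_Icc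
  have hmain := norm_integral_inv_ofReal_sub_smul_le_rpow hab hc₀ hc hα hu hu' hf hu'c hu''C hf'
    hfa hfb
  rw [lpNorm_two_eq_sqrt_integral_norm_sq hfm,
    lpNorm_two_eq_sqrt_integral_norm_sq hf'.aestronglyMeasurable] at hmain
  simp only [integral_Icc_eq_integral_Ioc, ← intervalIntegral.integral_of_le hab] at hmain
  set N := √(∫ y in a..b, ‖f y‖ ^ 2)
  set N' := √(∫ y in a..b, ‖f' y‖ ^ 2)
  have hN' : 0 ≤ N' := sqrt_nonneg _
  have hle {B : ℝ} (hB : 2 * N' + (α + 2 * C₀ * c₀⁻¹) * N ≤ 2 * (1 + C₀) * B) :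
      ‖∫ y in a..b, ((u y : ℂ) - c)⁻¹ • f y‖ ≤
        2 * √π * (1 + C₀) * c₀⁻¹ * α ^ (-(1 : ℝ) / 2) * B :=
    calc _ ≤ √π * c₀⁻¹ * α ^ (-(1 : ℝ) / 2) * (2 * (1 + C₀) * B) := hmain.trans (by gcongr)
      _ = _ := by ring
  have hCN' := mul_nonneg hC₀ hN'
  have hαN : 0 ≤ α * N := by positivity
  have hCαN : 0 ≤ C₀ * (α * N) := by positivity
  refine ⟨hle ?_, fun hcα ↦ hle ?_⟩
  · have hcN : 0 ≤ c₀⁻¹ * N := by positivity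
    linarith
  · have hcα' : C₀ * (c₀⁻¹ * N) ≤ C₀ * (α * N) := by gcongr
    linarith

/-- **Hardy-type estimate via the limiting absorption principle**
(Lemma C.3): for `f ∈ H¹₀(a,b)`, `u ∈ C²([a,b])` real with `|u'| ≥ c₀ > 0`
and `|u''| ≤ C₀`, and `c ∈ ℂ∖ℝ`, for every `α ≥ 1`:
`|∫_a^b f/(u-c)| ≤ C c₀⁻¹ α^{-1/2}(‖f'‖ + α‖f‖ + c₀⁻¹‖f‖)`, and if moreover
`α ≥ c₀⁻¹` then `|∫_a^b f/(u-c)| ≤ C c₀⁻¹ α^{-1/2}(‖f'‖ + α‖f‖)`, where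
`C` depends only on `C₀`. -/
theorem hardy_type_limiting_absorption :
    ∀ C₀ : ℝ, 0 < C₀ →
      ∃ C : ℝ, 0 < C ∧
        ∀ (a b c₀ α : ℝ) (f : ℝ → ℂ) (u : ℝ → ℝ) (c : ℂ),
          a < b → 0 < c₀ →
          ContDiff ℝ 1 f → f a = 0 → f b = 0 →
          ContDiff ℝ 2 u →
          (∀ y ∈ Set.Icc a b, c₀ ≤ |deriv u y|) →
          (∀ y ∈ Set.Icc a b, |deriv (deriv u) y| ≤ C₀) →
          c.im ≠ 0 →
          1 ≤ α →
          (‖∫ y in a..b, f y / ((u y : ℂ) - c)‖ ≤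
              C * c₀⁻¹ * α ^ (-(1:ℝ)/2) *
                (Real.sqrt (∫ y in a..b, ‖deriv f y‖ ^ 2)
                  + α * Real.sqrt (∫ y in a..b, ‖f y‖ ^ 2)
                  + c₀⁻¹ * Real.sqrt (∫ y in a..b, ‖f y‖ ^ 2))) ∧
          (c₀⁻¹ ≤ α →
            ‖∫ y in a..b, f y / ((u y : ℂ) - c)‖ ≤
              C * c₀⁻¹ * α ^ (-(1:ℝ)/2) *
                (Real.sqrt (∫ y in a..b, ‖deriv f y‖ ^ 2)
                  + α * Real.sqrt (∫ y in a..b, ‖f y‖ ^ 2))) := by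
  refine fun C₀ hC₀ ↦ ⟨2 * √π * (1 + C₀), by positivity, ?_⟩
  intro a b c₀ α f u c hab hc₀ hf hfa hfb hu hu' hu'' hc hα
  simpa only [smul_eq_mul, ← div_eq_inv_mul] using hardy_type_limiting_absorption_general hab.le hc₀
    hc (one_pos.trans_le hα)
    (fun y _ ↦ (hu.differentiable two_ne_zero y).hasDerivAt.hasDerivWithinAt)
    (fun y _ ↦ (hu.differentiable_deriv_two y).hasDerivAt.hasDerivWithinAt)
    (fun y _ ↦ (hf.differentiable one_ne_zero y).hasDerivAt.hasDerivWithinAt) hu' hu''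
    (memLp_restrict_of_continuousOn_of_isCompact isCompact_Icc measurableSet_Icc
      hf.continuous_deriv_one.continuousOn) hfa hfb
end
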